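/- arXiv:0709.4403 — 2 statements merged into one kernel-verified Lean document; each statement's English description precedes it below -/
import Mathlib

section
/- For all 3×3 complex matrices X, Y and Z, one has the matrix identity 3·X²ZY² = pol₂(X,Y,Z). -/
open Matrix

/-- The polarization of the Cayley-Hamilton polynomial for 3x3 complex matrices. -/
noncomputable def pol (X Y : Matrix (Fin 3) (Fin 3) ℂ) : Matrix (Fin 3) (Fin 3) ℂ :=
  (trace X) • (Y * X + X * Y) + (trace (X * Y) - trace X * trace Y) • X
    + ((trace (X * X) - (trace X) ^ 2) / 2) • Y
    + (trace (Y * X * X) - trace X * trace (X * Y)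
        + trace Y * (((trace X) ^ 2 - trace (X * X)) / 2)) • (1 : Matrix (Fin 3) (Fin 3) ℂ)
    + (trace Y) • (X * X)

/-- Step 1 polynomial of the reduction algorithm. -/
noncomputable def pol₂ (X Y Z : Matrix (Fin 3) (Fin 3) ℂ) : Matrix (Fin 3) (Fin 3) ℂ :=
  pol Y (X * X * Z) + X * pol Y (X * Z) - pol X (Y * Y) * Z - pol X Y * Z * Y
    + (X * X) * pol Y Z

set_option maxHeartbeats 4000000 in
theorem pol_eq_aux (X Y : Matrix (Fin 3) (Fin 3) ℂ) :
    pol X Y = Y * X * X + X * Y * X + X * X * Y := by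
  ext i j
  fin_cases i <;> fin_cases j <;>
  · simp [pol, Matrix.trace, Matrix.mul_apply, Fin.sum_univ_three, Matrix.one_apply]
    ring

/-- STEP 1: `3·X²ZY² = pol₂(X,Y,Z)`. -/
theorem step1_reduction (X Y Z : Matrix (Fin 3) (Fin 3) ℂ) :
    (3 : ℂ) • (X * X * Z * Y * Y) = pol₂ X Y Z := by
  have h : (3 : ℂ) • (X * X * Z * Y * Y)
      = X * X * Z * Y * Y + X * X * Z * Y * Y + X * X * Z * Y * Y := by
    module
  rw [h, pol₂]
  simp only [pol_eq_aux]
  noncomm_ring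
end

section
/- For all 3×3 complex matrices X, U, V, W and Z, one has the matrix identity 6·X²ZWUV = pol₃(X,U,V,W,Z). -/
open Matrix

/-- Intermediate polynomial of STEP 2. -/
noncomputable def prepol₃ (X U V Z : Matrix (Fin 3) (Fin 3) ℂ) : Matrix (Fin 3) (Fin 3) ℂ :=
  pol₂ X (U + V) Z - pol₂ X U Z - pol₂ X V Z

/-- STEP 2 polynomial of the reduction algorithm. -/
noncomputable def pol₃ (X U V W Z : Matrix (Fin 3) (Fin 3) ℂ) : Matrix (Fin 3) (Fin 3) ℂ :=
  prepol₃ X U V (Z * W) + prepol₃ X (W * U) V Z - prepol₃ X W V Z * U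

lemma pol_eq (X Y : Matrix (Fin 3) (Fin 3) ℂ) :
    pol X Y = X * X * Y + X * Y * X + Y * X * X := by
  ext i j
  fin_cases i <;> fin_cases j <;>
    simp [pol, Matrix.trace, Matrix.mul_apply, Fin.sum_univ_three, Matrix.one_apply] <;> ring

lemma pol₂_eq (X Y Z : Matrix (Fin 3) (Fin 3) ℂ) :
    pol₂ X Y Z = 3 * (X * X * Z * Y * Y) := by
  simp only [pol₂, pol_eq]
  noncomm_ring

lemma prepol₃_eq (X U V Z : Matrix (Fin 3) (Fin 3) ℂ) :
    prepol₃ X U V Z = 3 * (X * X * Z * (U * V + V * U)) := by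
  simp only [prepol₃, pol₂_eq]
  noncomm_ring

/-- STEP 2: `6·X²ZWUV = pol₃(X,U,V,W,Z)`. -/
theorem step2_reduction (X U V W Z : Matrix (Fin 3) (Fin 3) ℂ) :
    (6 : ℂ) • (X * X * Z * W * U * V) = pol₃ X U V W Z := by
  have h : (6 : ℂ) • (X * X * Z * W * U * V) = 6 * (X * X * Z * W * U * V) := by
    rw [ofNat_smul_eq_nsmul, nsmul_eq_mul]
    rfl
  rw [h]
  simp only [pol₃, prepol₃_eq]
  noncomm_ring
end
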